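/- Fix integers 1 ≤ p < n. The polynomials D_I with I ranging over all PBW tuples form a sagbi basis of the Plücker algebra 𝒫 with respect to the monomial order <_pbw; equivalently, the initial subalgebra in_{<_pbw}(𝒫) is generated by the monomials in_{<_pbw}(D_I) = z_{1,α₁}⋯z_{p,α_p} for PBW tuples I = (α₁,…,α_p). -/

import Mathlib

open scoped Classical

noncomputable section

open MvPolynomial

/-- The initial (leading) term of `f` with respect to the strict monomial order `lt`:
the term of `f` whose monomial is `lt`-maximal in the support (or `0` if none exists). -/
def initTerm {σ : Type*} (lt : (σ →₀ ℕ) → (σ →₀ ℕ) → Prop)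
    (f : MvPolynomial σ ℂ) : MvPolynomial σ ℂ :=
  if h : ∃ m, m ∈ f.support ∧ ∀ m' ∈ f.support, m' ≠ m → lt m' m
  then monomial h.choose (coeff h.choose f)
  else 0

/-- The initial subalgebra of `A` (as a ℂ-submodule): the span of the
initial terms of elements of `A`. -/
def initSpan {σ : Type*} (lt : (σ →₀ ℕ) → (σ →₀ ℕ) → Prop)
    (A : Subalgebra ℂ (MvPolynomial σ ℂ)) : Submodule ℂ (MvPolynomial σ ℂ) :=
  Submodule.span ℂ (initTerm lt '' (A : Set (MvPolynomial σ ℂ)))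

/-- The degree reverse lexicographic order on monomials, where the variables are
enumerated according to `rank`: `a < b` iff `deg a < deg b`, or the degrees agree and
at the last (highest-rank) variable where `a` and `b` differ, `a` has the larger exponent. -/
def degRevLex {σ : Type*} (rank : σ → ℕ) (a b : σ →₀ ℕ) : Prop :=
  (a.sum fun _ e => e) < (b.sum fun _ e => e) ∨
    ((a.sum fun _ e => e) = (b.sum fun _ e => e) ∧
      ∃ i, b i < a i ∧ ∀ j, rank i < rank j → a j = b j)
/-- The Plücker minor `D_I`: the determinant of the `p×p` matrix whose `j`-th column
is the `α j`-th column of the generic `p×n` matrix of variables `z_{i,j}`. -/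
def Dmin (p n : ℕ) (α : Fin p → Fin n) : MvPolynomial (Fin p × Fin n) ℂ :=
  (Matrix.of fun i j : Fin p => (X (i, α j) : MvPolynomial (Fin p × Fin n) ℂ)).det

/-- The Plücker algebra `𝒫`: the subalgebra generated by all minors `D_I`. -/
def Pluecker (p n : ℕ) : Subalgebra ℂ (MvPolynomial (Fin p × Fin n) ℂ) :=
  Algebra.adjoin ℂ (Set.range (Dmin p n))

/-- `α` is a PBW tuple (0-indexed version): the entries are pairwise distinct, entries
`< p` stand at the position equal to their value, and entries `≥ p` appear in
decreasing order. -/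
def IsPBW (p n : ℕ) (α : Fin p → Fin n) : Prop :=
  Function.Injective α ∧ (∀ j : Fin p, (α j : ℕ) < p → (α j : ℕ) = (j : ℕ)) ∧
    ∀ j k : Fin p, p ≤ (α k : ℕ) → (α k : ℕ) < (α j : ℕ) → j < k

/-- The position of the variable `z_{i,j}` in the PBW ordering of the variables: first
by row, then cyclically within the `i`-th row starting with `z_{i,i}`. -/
def rankPBW (p n : ℕ) (x : Fin p × Fin n) : ℕ :=
  (x.1 : ℕ) * n + ((x.2 : ℕ) + n - (x.1 : ℕ)) % n

/-!
The exchange relations straighten every product of `d` minors into a combination of the products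
attached to semistandard tableaux with `d` columns. A column of such a tableau is the same thing as
a partition with at most `p` rows of length at most `n - p`, and its corners define a PBW tuple.
Multiplying the PBW minors of all the columns gives a product from whose leading monomial one
recovers, for each `k` in turn, the `k`-th rows of all the partitions. Hence these products have
pairwise distinct leading monomials, are linearly independent, and, being as numerous as the
tableaux, form a basis of the span of the products of `d` minors. A spanning set of a subalgebra
with pairwise distinct leading monomials whose members are products of given generators makes these
generators a sagbi basis.
-/

section DegRevLex

variable {σ : Type*} {rank : σ → ℕ}

theorem degRevLex_iff {a b : σ →₀ ℕ} : degRevLex rank a b ↔ a.degree < b.degree ∨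
    (a.degree = b.degree ∧ ∃ i, b i < a i ∧ ∀ j, rank i < rank j → a j = b j) :=
  Iff.rfl

theorem degRevLex_irrefl (a : σ →₀ ℕ) : ¬ degRevLex rank a a := by
  rintro (h | ⟨-, i, hi, -⟩)
  · exact lt_irrefl _ h
  · exact lt_irrefl _ hi

theorem degRevLex_trans (hr : Function.Injective rank) {a b c : σ →₀ ℕ}
    (hab : degRevLex rank a b) (hbc : degRevLex rank b c) : degRevLex rank a c := by
  rcases hab with hab | ⟨hab, i, hi, hi'⟩ <;> rcases hbc with hbc | ⟨hbc, j, hj, hj'⟩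
  · exact Or.inl (hab.trans hbc)
  · exact Or.inl (hab.trans_eq hbc)
  · exact Or.inl (hab.trans_lt hbc)
  · refine Or.inr ⟨hab.trans hbc, ?_⟩
    rcases lt_trichotomy (rank i) (rank j) with h | h | h
    · exact ⟨j, by rwa [hi' j h], fun k hk => (hi' k (h.trans hk)).trans (hj' k hk)⟩
    · obtain rfl := hr h
      exact ⟨i, hj.trans hi, fun k hk => (hi' k hk).trans (hj' k hk)⟩
    · exact ⟨i, by rwa [← hj' i h], fun k hk => (hi' k hk).trans (hj' k (h.trans hk))⟩

theorem exists_ne_forall_rank_lt_eq {a b : σ →₀ ℕ} (hab : a ≠ b) :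
    ∃ i, a i ≠ b i ∧ ∀ j, rank i < rank j → a j = b j := by
  obtain ⟨i₀, hi₀⟩ := Finsupp.ne_iff.1 hab
  obtain ⟨i, hi, hmax⟩ :=
    (a.neLocus b).exists_max_image rank ⟨i₀, Finsupp.mem_neLocus.2 hi₀⟩
  refine ⟨i, Finsupp.mem_neLocus.1 hi, fun j hj => ?_⟩
  by_contra hne
  exact (hmax j (Finsupp.mem_neLocus.2 hne)).not_gt hj

theorem degRevLex_or_degRevLex_of_ne {a b : σ →₀ ℕ} (hab : a ≠ b) :
    degRevLex rank a b ∨ degRevLex rank b a := by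
  rcases lt_trichotomy a.degree b.degree with h | h | h
  · exact Or.inl (Or.inl h)
  · obtain ⟨i, hi, hagree⟩ := exists_ne_forall_rank_lt_eq (rank := rank) hab
    rcases lt_or_gt_of_ne hi with hlt | hgt
    · exact Or.inr (Or.inr ⟨h.symm, i, hlt, fun j hj => (hagree j hj).symm⟩)
    · exact Or.inl (Or.inr ⟨h, i, hgt, hagree⟩)
  · exact Or.inr (Or.inl h)

theorem degRevLex_add_right {a b : σ →₀ ℕ} (hab : degRevLex rank a b) (c : σ →₀ ℕ) :
    degRevLex rank (a + c) (b + c) := by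
  simpa only [degRevLex_iff, map_add, Finsupp.add_apply, add_lt_add_iff_right,
    add_left_inj] using hab

theorem degRevLex_of_lt {a b : σ →₀ ℕ} (hab : a < b) : degRevLex rank a b := by
  obtain ⟨c, rfl⟩ := exists_add_of_le hab.le
  have hc : c ≠ 0 := by
    rintro rfl
    exact hab.ne (add_zero a).symm
  refine degRevLex_iff.2 (Or.inl ?_)
  rw [map_add]
  exact Nat.lt_add_of_pos_right (Nat.pos_of_ne_zero (mt (Finsupp.degree_eq_zero_iff c).1 hc))

/-- The exponent vectors `σ →₀ ℕ`, as a type on which to put the order `degRevLex rank`. -/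
def DegRevLex (_hr : Function.Injective rank) : Type _ := σ →₀ ℕ

namespace DegRevLex

variable (hr : Function.Injective rank)

instance : AddCommMonoid (DegRevLex hr) :=
  inferInstanceAs (AddCommMonoid (σ →₀ ℕ))

instance : LinearOrder (DegRevLex hr) :=
  haveI : IsStrictTotalOrder (σ →₀ ℕ) (degRevLex rank) :=
    { irrefl := degRevLex_irrefl
      trans := fun _ _ _ => degRevLex_trans hr
      trichotomous := fun a b hab hba => by
        by_contra hne
        exact (degRevLex_or_degRevLex_of_ne hne).elim hab hba }
  linearOrderOfSTO (α := σ →₀ ℕ) (degRevLex rank)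

instance : IsOrderedAddMonoid (DegRevLex hr) where
  add_le_add_left _ _ hab c := hab.imp (congrArg (· + c)) fun h =>
    degRevLex_add_right h c

end DegRevLex

/-- The order `degRevLex rank` as a `MonomialOrder`. -/
def degRevLexOrder [Finite σ] (hr : Function.Injective rank) : MonomialOrder σ :=
  let toSyn : (σ →₀ ℕ) ≃+ DegRevLex hr := AddEquiv.refl (σ →₀ ℕ)
  have toSyn_monotone : Monotone toSyn := fun _ _ hab =>
    hab.eq_or_lt.imp id degRevLex_of_lt
  { syn := DegRevLex hr
    toSyn := toSyn
    toSyn_monotone := toSyn_monotone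
    wellFoundedLT_syn :=
      wellQuasiOrderedLE_iff_wellFoundedLT.1 <|
        toSyn_monotone.wellQuasiOrderedLE_of_wellQuasiOrderedLE_of_surjective toSyn.surjective }

theorem degRevLexOrder_lt_iff [Finite σ] {hr : Function.Injective rank} {a b : σ →₀ ℕ} :
    (degRevLexOrder hr).toSyn a < (degRevLexOrder hr).toSyn b ↔ degRevLex rank a b :=
  Iff.rfl

theorem initTerm_degRevLex_eq_leadingTerm [Finite σ] (hr : Function.Injective rank)
    (f : MvPolynomial σ ℂ) :
    initTerm (degRevLex rank) f = (degRevLexOrder hr).leadingTerm f := by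
  set m := degRevLexOrder hr
  rcases eq_or_ne f 0 with rfl | hf
  · simp [initTerm]
  have hmax : m.degree f ∈ f.support ∧ ∀ a ∈ f.support, a ≠ m.degree f →
      degRevLex rank a (m.degree f) :=
    ⟨m.degree_mem_support hf, fun a ha hne =>
      (m.le_degree ha).lt_of_ne (m.toSyn.injective.ne hne)⟩
  have hex : ∃ d, d ∈ f.support ∧ ∀ a ∈ f.support, a ≠ d → degRevLex rank a d := ⟨_, hmax⟩
  have hchoose : hex.choose = m.degree f := by
    by_contra hne
    exact degRevLex_irrefl _ (degRevLex_trans hr (hmax.2 _ hex.choose_spec.1 hne)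
      (hex.choose_spec.2 _ hmax.1 (Ne.symm hne)))
  rw [initTerm, dif_pos hex, hchoose]
  rfl

end DegRevLex

section LeadingTerm

variable {σ R : Type*} [CommRing R] [NoZeroDivisors R] {m : MonomialOrder σ}

theorem leadingTerm_smul (c : R) (f : MvPolynomial σ R) :
    m.leadingTerm (c • f) = c • m.leadingTerm f := by
  rw [smul_eq_C_mul, m.leadingTerm_mul, m.leadingTerm_C, smul_eq_C_mul]

variable (m R) in
/-- Taking leading terms, as a multiplicative map. -/
def leadingTermHom : MvPolynomial σ R →* MvPolynomial σ R where
  toFun := m.leadingTerm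
  map_one' := m.leadingTerm_C 1
  map_mul' := m.leadingTerm_mul

theorem exists_leadingTerm_sum_eq {ι R : Type*} [CommSemiring R] {s : Finset ι} (hs : s.Nonempty)
    {f : ι → MvPolynomial σ R} (hf : ∀ i ∈ s, f i ≠ 0)
    (hinj : Set.InjOn (fun i => m.degree (f i)) s) :
    ∃ i ∈ s, m.leadingTerm (∑ j ∈ s, f j) = m.leadingTerm (f i) := by
  obtain ⟨i, hi, hmax⟩ := s.exists_max_image (fun i => m.toSyn (m.degree (f i))) hs
  have hlt : ∀ j ∈ s, j ≠ i → m.toSyn (m.degree (f j)) < m.toSyn (m.degree (f i)) :=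
    fun j hj hji => (hmax j hj).lt_of_ne (m.toSyn.injective.ne (hinj.ne hj hi hji))
  have hcoeff : coeff (m.degree (f i)) (∑ j ∈ s, f j) = m.leadingCoeff (f i) := by
    rw [coeff_sum]
    exact Finset.sum_eq_single_of_mem i hi fun j hj hji => m.coeff_eq_zero_of_lt (hlt j hj hji)
  have hdegree : m.degree (∑ j ∈ s, f j) = m.degree (f i) := by
    refine m.toSyn.injective (le_antisymm ?_ (m.le_degree ?_))
    · exact m.degree_sum_le.trans (Finset.sup_le hmax)
    · rw [mem_support_iff, hcoeff]
      exact m.leadingCoeff_ne_zero_iff.2 (hf i hi)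
  refine ⟨i, hi, ?_⟩
  rw [MonomialOrder.leadingTerm, MonomialOrder.leadingTerm, MonomialOrder.leadingCoeff, hdegree,
    hcoeff]

theorem exists_leadingTerm_linearCombination_eq {ι : Type*} {f : ι → MvPolynomial σ R}
    (hf : ∀ i, f i ≠ 0) (hinj : Function.Injective fun i => m.degree (f i)) {c : ι →₀ R}
    (hc : c ≠ 0) :
    ∃ i ∈ c.support, m.leadingTerm (Finsupp.linearCombination R f c) =
      c i • m.leadingTerm (f i) := by
  have hci : ∀ i ∈ c.support, c i ≠ 0 := fun i => Finsupp.mem_support_iff.1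
  have hdegree : ∀ i ∈ c.support, m.degree (c i • f i) = m.degree (f i) := fun i hi =>
    m.degree_smul_of_mem_nonZeroDivisors (mem_nonZeroDivisors_of_ne_zero (hci i hi))
  obtain ⟨i, hi, hlead⟩ := exists_leadingTerm_sum_eq (m := m)
    (Finsupp.support_nonempty_iff.2 hc) (fun i hi => smul_ne_zero (hci i hi) (hf i))
    fun i hi j hj hij => hinj ((hdegree i hi).symm.trans (hij.trans (hdegree j hj)))
  exact ⟨i, hi, hlead.trans (leadingTerm_smul _ _)⟩

theorem linearIndependent_of_degree_injective {ι : Type*} {f : ι → MvPolynomial σ R}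
    (hf : ∀ i, f i ≠ 0) (hinj : Function.Injective fun i => m.degree (f i)) :
    LinearIndependent R f := by
  refine linearIndependent_iff.2 fun c hc => ?_
  by_contra hne
  obtain ⟨i, hi, hlead⟩ := exists_leadingTerm_linearCombination_eq (m := m) hf hinj hne
  rw [hc, m.leadingTerm_zero] at hlead
  exact smul_ne_zero (Finsupp.mem_support_iff.1 hi)
    (mt (m.leadingTerm_eq_zero_iff _).1 (hf i)) hlead.symm

theorem leadingTerm_mem_span_of_mem_span {ι : Type*} {f : ι → MvPolynomial σ R}
    (hf : ∀ i, f i ≠ 0) (hinj : Function.Injective fun i => m.degree (f i))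
    {g : MvPolynomial σ R} (hg : g ∈ Submodule.span R (Set.range f)) :
    m.leadingTerm g ∈ Submodule.span R (Set.range fun i => m.leadingTerm (f i)) := by
  obtain ⟨c, rfl⟩ := (Finsupp.mem_span_range_iff_exists_finsupp).1 hg
  rcases eq_or_ne c 0 with rfl | hc
  · simp
  · obtain ⟨i, -, hlead⟩ := exists_leadingTerm_linearCombination_eq (m := m) hf hinj hc
    rw [← Finsupp.linearCombination_apply, hlead]
    exact Submodule.smul_mem _ _ (Submodule.subset_span (Set.mem_range_self i))

theorem adjoin_leadingTerm_image_le {A : Subalgebra R (MvPolynomial σ R)}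
    {S : Set (MvPolynomial σ R)} (hS : S ⊆ A) :
    Subalgebra.toSubmodule (Algebra.adjoin R (m.leadingTerm '' S)) ≤
      Submodule.span R (m.leadingTerm '' A) := by
  rw [Algebra.adjoin_eq_span]
  refine Submodule.span_mono ?_
  change (Submonoid.closure (leadingTermHom R m '' S) : Set (MvPolynomial σ R)) ⊆ _
  rw [← MonoidHom.map_mclosure]
  exact Set.image_mono ((Submonoid.closure_le (S := A.toSubmonoid)).2 hS)

/-- The conclusion says that `S` is a sagbi basis of `A`. -/
theorem adjoin_leadingTerm_image_eq {ι : Type*} {A : Subalgebra R (MvPolynomial σ R)}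
    {S : Set (MvPolynomial σ R)} (hS : S ⊆ A) {b : ι → MvPolynomial σ R}
    (hbS : ∀ i, b i ∈ Submonoid.closure S) (hb : ∀ i, b i ≠ 0)
    (hinj : Function.Injective fun i => m.degree (b i))
    (hA : ∀ f ∈ A, f ∈ Submodule.span R (Set.range b)) :
    Subalgebra.toSubmodule (Algebra.adjoin R (m.leadingTerm '' S)) =
      Submodule.span R (m.leadingTerm '' A) := by
  refine le_antisymm (adjoin_leadingTerm_image_le hS) (Submodule.span_le.2 ?_)
  rintro _ ⟨f, hf, rfl⟩
  refine Submodule.span_le.2 ?_ (leadingTerm_mem_span_of_mem_span hb hinj (hA f hf))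
  rintro _ ⟨i, rfl⟩
  have hmap := Submonoid.mem_map_of_mem (leadingTermHom R m) (hbS i)
  rw [MonoidHom.map_mclosure] at hmap
  exact Submonoid.closure_le.2 (Algebra.subset_adjoin (R := R)) hmap

end LeadingTerm

theorem adjoin_eq_of_mem_span_range {ι R B : Type*} [CommSemiring R] [Semiring B] [Algebra R B]
    {A : Subalgebra R B} {S : Set B} (hS : S ⊆ A) {b : ι → B}
    (hbS : ∀ i, b i ∈ Submonoid.closure S) (hA : ∀ f ∈ A, f ∈ Submodule.span R (Set.range b)) :
    Algebra.adjoin R S = A := by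
  refine le_antisymm (Algebra.adjoin_le hS) fun f hf => ?_
  rw [← Subalgebra.mem_toSubmodule, Algebra.adjoin_eq_span]
  exact Submodule.span_mono (Set.range_subset_iff.2 hbS) (hA f hf)

theorem span_range_eq_of_linearIndependent {ι K V : Type*} [Finite ι] [DivisionRing K]
    [AddCommGroup V] [Module K V] {v w : ι → V} (hv : LinearIndependent K v)
    (hvw : ∀ i, v i ∈ Submodule.span K (Set.range w)) :
    Submodule.span K (Set.range v) = Submodule.span K (Set.range w) := by
  cases nonempty_fintype ι
  have : FiniteDimensional K (Submodule.span K (Set.range w)) :=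
    FiniteDimensional.span_of_finite K (Set.finite_range w)
  refine Submodule.eq_of_le_of_finrank_le (Submodule.span_le.2 (Set.range_subset_iff.2 hvw)) ?_
  rw [finrank_span_eq_card hv]
  exact finrank_range_le_card w

section InitialTermOfMinor

variable {p n : ℕ} {κ : Type*}

/-- The exponent vector of the term `∏ j, z_{τ(j),α(j)}` of the minor with columns `α`. -/
def permExp (α : Fin p → κ) (τ : Equiv.Perm (Fin p)) : Fin p × κ →₀ ℕ :=
  ∑ j, Finsupp.single (τ j, α j) 1

theorem permExp_apply (α : Fin p → κ) (τ : Equiv.Perm (Fin p)) (i : Fin p) (x : κ) :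
    permExp α τ (i, x) = if α (τ⁻¹ i) = x then 1 else 0 := by
  rw [permExp, Finsupp.finsetSum_apply, Finset.sum_eq_single (τ⁻¹ i)]
  · simp [Finsupp.single_apply]
  · intro j _ hj
    have hrow : τ j ≠ i := fun h => hj (Equiv.Perm.eq_inv_iff_eq.2 h)
    simp [hrow]
  · simp

theorem degree_permExp (α : Fin p → κ) (τ : Equiv.Perm (Fin p)) : (permExp α τ).degree = p := by
  simp [permExp]

theorem exists_apply_lt_forall_lt_apply_eq {ι : Type*} [Finite ι] [LinearOrder ι]
    {τ : Equiv.Perm ι} (hτ : τ ≠ 1) : ∃ i, τ i < i ∧ ∀ j, i < j → τ j = j := by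
  cases nonempty_fintype ι
  have hsupp : τ.support.Nonempty :=
    Finset.nonempty_iff_ne_empty.2 (mt Equiv.Perm.support_eq_empty_iff.1 hτ)
  have hfix : ∀ j, τ.support.max' hsupp < j → τ j = j := fun j hj =>
    Equiv.Perm.notMem_support.1 fun hmem => (τ.support.le_max' j hmem).not_gt hj
  have hmoved := Equiv.Perm.mem_support.1 (τ.support.max'_mem hsupp)
  refine ⟨τ.support.max' hsupp, lt_of_le_of_ne (not_lt.1 fun hlt => ?_) hmoved, hfix⟩
  exact hmoved (τ.injective (hfix _ hlt))

theorem degRevLex_permExp {rank : Fin p × κ → ℕ} {α : Fin p → κ} (hα : Function.Injective α)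
    (hrow : ∀ {i j : Fin p}, i < j → ∀ x y, rank (i, x) < rank (j, y))
    (hcol : ∀ {k i : Fin p}, k < i → rank (i, α i) < rank (i, α k))
    {τ : Equiv.Perm (Fin p)} (hτ : τ ≠ 1) :
    degRevLex rank (permExp α τ) (permExp α 1) := by
  obtain ⟨i, hlt, hfix⟩ := exists_apply_lt_forall_lt_apply_eq (inv_ne_one.2 hτ)
  refine degRevLex_iff.2 (Or.inr ⟨?_, (i, α (τ⁻¹ i)), ?_, ?_⟩)
  · rw [degree_permExp, degree_permExp]
  · rw [permExp_apply, permExp_apply, if_pos rfl, inv_one,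
      Equiv.Perm.one_apply, if_neg (hα.ne hlt.ne')]
    exact one_pos
  · rintro ⟨j, x⟩ hjx
    simp only [permExp_apply, inv_one, Equiv.Perm.one_apply]
    rcases lt_trichotomy i j with hij | rfl | hji
    · rw [hfix j hij]
    · rw [if_neg, if_neg]
      · rintro rfl
        exact ((hcol hlt).trans hjx).false
      · rintro rfl
        exact hjx.false
    · exact absurd (hrow hji x (α (τ⁻¹ i))) hjx.not_gt

theorem rankPBW_lt_of_row_lt {i j : Fin p} (h : i < j) (x y : Fin n) :
    rankPBW p n (i, x) < rankPBW p n (j, y) := by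
  have hmod : ((x : ℕ) + n - i) % n < n := Nat.mod_lt _ x.pos
  have hmul : ((i : ℕ) + 1) * n ≤ j * n := Nat.mul_le_mul_right n h
  rw [add_one_mul] at hmul
  simp only [rankPBW]
  omega

theorem rankPBW_injective (hpn : p ≤ n) : Function.Injective (rankPBW p n) := by
  rintro ⟨i, x⟩ ⟨j, y⟩ h
  obtain rfl : i = j := by
    by_contra hne
    rcases lt_or_gt_of_ne hne with hij | hji
    · exact (rankPBW_lt_of_row_lt hij x y).ne h
    · exact (rankPBW_lt_of_row_lt hji y x).ne' h
  have hmod : (x : ℕ) + n - i ≡ (y : ℕ) + n - i [MOD n] := Nat.add_left_cancel h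
  have hmod' := hmod.add_right (i : ℕ)
  rw [Nat.sub_add_cancel (by omega), Nat.sub_add_cancel (by omega)] at hmod'
  exact Prod.ext rfl (Fin.ext ((hmod'.add_right_cancel' n).eq_of_lt_of_lt x.2 y.2))

theorem rankPBW_of_le {i : Fin p} {x : Fin n} (h : (i : ℕ) ≤ x) :
    rankPBW p n (i, x) = i * n + (x - i) := by
  rw [rankPBW, Nat.sub_add_comm h, Nat.add_mod_right, Nat.mod_eq_of_lt (by omega)]

theorem rankPBW_of_lt {i : Fin p} {x : Fin n} (h : (x : ℕ) < i) :
    rankPBW p n (i, x) = i * n + (x + n - i) := by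
  have hlt : (x : ℕ) + n - i < n := by have := x.2; omega
  rw [rankPBW, Nat.mod_eq_of_lt hlt]

namespace IsPBW

variable {α : Fin p → Fin n}

theorem le_apply (hα : IsPBW p n α) (i : Fin p) : (i : ℕ) ≤ α i := by
  rcases lt_or_ge (α i : ℕ) p with h | h
  · exact (hα.2.1 i h).ge
  · exact i.2.le.trans h

theorem rankPBW_lt (hα : IsPBW p n α) {k i : Fin p} (hki : k < i) :
    rankPBW p n (i, α i) < rankPBW p n (i, α k) := by
  have hi := hα.le_apply i
  obtain ⟨hinj, hsmall, hlarge⟩ := hα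
  rw [rankPBW_of_le hi]
  rcases lt_or_ge (α k : ℕ) p with hk | hk
  · have hk' := hsmall k hk
    rw [rankPBW_of_lt (by omega)]
    omega
  · rw [rankPBW_of_le (by omega)]
    have hne : (α k : ℕ) ≠ α i := fun h => hki.ne (hinj (Fin.ext h))
    have hnlt : ¬ (α k : ℕ) < α i := fun h => (hlarge i k hk h).not_gt hki
    omega

theorem degRevLex_permExp (hα : IsPBW p n α) {τ : Equiv.Perm (Fin p)} (hτ : τ ≠ 1) :
    degRevLex (rankPBW p n) (permExp α τ) (permExp α 1) :=
  _root_.degRevLex_permExp hα.1 rankPBW_lt_of_row_lt (hα.rankPBW_lt) hτ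

end IsPBW

theorem Dmin_eq_sum_monomial (α : Fin p → Fin n) :
    Dmin p n α = ∑ τ : Equiv.Perm (Fin p), monomial (permExp α τ) ((τ.sign : ℤ) : ℂ) := by
  rw [Dmin, Matrix.det_apply']
  refine Finset.sum_congr rfl fun τ _ => ?_
  rw [← mul_one ((τ.sign : ℤ) : ℂ), ← C_mul_monomial, permExp, monomial_sum_one]
  simp [X]

/-- The monomial order `<_pbw` on the polynomials in the entries of a `p × n` matrix. -/
def pbwOrder (hpn : p ≤ n) : MonomialOrder (Fin p × Fin n) :=
  degRevLexOrder (rankPBW_injective hpn)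

namespace IsPBW

variable {α : Fin p → Fin n}

theorem coeff_Dmin (hα : IsPBW p n α) :
    coeff (permExp α 1) (Dmin p n α) = 1 := by
  rw [Dmin_eq_sum_monomial, coeff_sum, Finset.sum_eq_single 1]
  · simp
  · intro τ _ hτ
    rw [coeff_monomial, if_neg]
    intro h
    exact degRevLex_irrefl _ (h ▸ hα.degRevLex_permExp hτ)
  · simp

theorem degree_Dmin (hα : IsPBW p n α) (hpn : p ≤ n) :
    (pbwOrder hpn).degree (Dmin p n α) = permExp α 1 := by
  set m := pbwOrder hpn
  refine m.toSyn.injective (le_antisymm (m.degree_le_iff.2 fun a ha => ?_) (m.le_degree ?_))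
  · rw [Dmin_eq_sum_monomial] at ha
    obtain ⟨τ, -, hτ⟩ := Finset.mem_biUnion.1 (support_sum ha)
    obtain rfl := Finset.mem_singleton.1 (support_monomial_subset hτ)
    rcases eq_or_ne τ 1 with rfl | hne
    · exact le_rfl
    · exact (degRevLexOrder_lt_iff.2 (hα.degRevLex_permExp hne)).le
  · rw [mem_support_iff, hα.coeff_Dmin]
    exact one_ne_zero

theorem leadingTerm_Dmin (hα : IsPBW p n α) (hpn : p ≤ n) :
    (pbwOrder hpn).leadingTerm (Dmin p n α) = ∏ j, X (j, α j) := by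
  rw [MonomialOrder.leadingTerm, MonomialOrder.leadingCoeff, hα.degree_Dmin,
    hα.coeff_Dmin, permExp, monomial_sum_one]
  rfl

theorem Dmin_ne_zero (hα : IsPBW p n α) : Dmin p n α ≠ 0 := fun h => by
  simpa [h] using hα.coeff_Dmin

end IsPBW

end InitialTermOfMinor

section Exchange

theorem extend_update {ι κ A : Type*} [DecidableEq ι] [DecidableEq κ] {φ : κ → ι}
    (hφ : Function.Injective φ) (w : κ → A) (v : ι → A) (k : κ) (x : A) :
    Function.extend φ (Function.update w k x) v =
      Function.update (Function.extend φ w v) (φ k) x := by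
  funext i
  by_cases hi : ∃ j, φ j = i
  · obtain ⟨j, rfl⟩ := hi
    simp only [hφ.extend_apply, Function.update_apply, hφ.eq_iff]
  · rw [Function.extend_apply' _ _ _ hi, Function.update_of_ne fun h => hi ⟨k, h.symm⟩,
      Function.extend_apply' _ _ _ hi]

/-- The alternating map obtained from `f` by fixing the arguments outside the image of `φ` to be
those of `v`. -/
def partialAlternating {R M N ι κ : Type*} [CommSemiring R] [AddCommMonoid M] [Module R M]
    [AddCommMonoid N] [Module R N] (f : M [⋀^ι]→ₗ[R] N) (φ : κ ↪ ι) (v : ι → M) :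
    M [⋀^κ]→ₗ[R] N where
  toFun w := f (Function.extend φ w v)
  map_update_add' w k x y := by
    simp only [extend_update φ.injective, f.map_update_add]
  map_update_smul' w k c x := by
    simp only [extend_update φ.injective, f.map_update_smul]
  map_eq_zero_of_eq' w i j hw hij := f.map_eq_zero_of_eq _
    (by simpa only [φ.injective.extend_apply] using hw) (φ.injective.ne hij)

/-- The wedge product of `a` and `b` vanishes on linearly dependent arguments; its summands are
indexed by the cosets of the permutations preserving the two blocks. -/
theorem mul_mem_closure_of_not_linearIndependent {R M ι κ : Type*} [CommRing R] [IsDomain R]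
    [AddCommGroup M] [Module R M] [Module.IsTorsionFree R M] [Finite ι] [Finite κ]
    (a : M [⋀^ι]→ₗ[R] R) (b : M [⋀^κ]→ₗ[R] R) {w : ι ⊕ κ → M} (hw : ¬ LinearIndependent R w) :
    a (w ∘ Sum.inl) * b (w ∘ Sum.inr) ∈ AddSubgroup.closure
      {x | ∃ σ ∉ (Equiv.Perm.sumCongrHom ι κ).range,
        x = a (w ∘ σ ∘ Sum.inl) * b (w ∘ σ ∘ Sum.inr)} := by
  cases nonempty_fintype ι
  cases nonempty_fintype κ
  have hzero := congrArg (LinearMap.mul' R R) ((a.domCoprod b).map_linearDependent w hw)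
  rw [AlternatingMap.domCoprod_apply, sum_apply, map_sum, map_zero] at hzero
  have hsplit :=
    (Finset.add_sum_erase (a := Quotient.mk'' 1) _ _ (by exact Finset.mem_univ _)).trans hzero
  have hone : LinearMap.mul' R R (AlternatingMap.domCoprod.summand a b (Quotient.mk'' 1) w) =
      a (w ∘ Sum.inl) * b (w ∘ Sum.inr) := by
    simp [AlternatingMap.domCoprod.summand_mk'', Function.comp_def]
  rw [← hone, eq_neg_of_add_eq_zero_left hsplit]
  refine neg_mem (sum_mem fun q hq => ?_)
  induction q using Quotient.inductionOn' with | _ σ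
  have hσ : σ ∉ (Equiv.Perm.sumCongrHom ι κ).range := fun hmem =>
    (Finset.mem_erase.1 hq).1
      (Quotient.sound' (QuotientGroup.leftRel_apply.2 (by simpa using hmem)))
  rw [AlternatingMap.domCoprod.summand_mk'', _root_.smul_apply, Units.smul_def, map_zsmul]
  refine zsmul_mem ?_ _
  exact AddSubgroup.subset_closure ⟨σ, hσ, by simp [Function.comp_def]⟩

theorem sum_comp_inl_lt_of_notMem_range_sumCongrHom {ι κ : Type*} [Fintype ι] [Finite κ]
    {u : ι ⊕ κ → ℕ} {c : ℕ} (hι : ∀ i, c ≤ u (Sum.inl i)) (hκ : ∀ j, u (Sum.inr j) < c)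
    {σ : Equiv.Perm (ι ⊕ κ)} (hσ : σ ∉ (Equiv.Perm.sumCongrHom ι κ).range) :
    ∑ i, u (σ (Sum.inl i)) < ∑ i, u (Sum.inl i) := by
  cases nonempty_fintype κ
  obtain ⟨i, j, hij⟩ : ∃ i j, σ (Sum.inl i) = Sum.inr j := by
    by_contra! h
    refine hσ (Equiv.Perm.mem_sumCongrHom_range_of_perm_mapsTo_inl ?_)
    rintro _ ⟨i, rfl⟩
    rcases hx : σ (Sum.inl i) with i' | j
    · exact ⟨i', rfl⟩
    · exact absurd hx (h i j)
  have htotal := Equiv.sum_comp σ fun x => max (u x) c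
  simp only [Fintype.sum_sum_type, max_eq_left (hι _), max_eq_right (hκ _).le] at htotal
  have hinl : ∑ i, u (σ (Sum.inl i)) < ∑ i, max (u (σ (Sum.inl i))) c :=
    Finset.sum_lt_sum (fun _ _ => le_max_left _ _)
      ⟨i, Finset.mem_univ i, by rw [hij]; exact lt_max_of_lt_right (hκ j)⟩
  have hinr : ∑ _j : κ, c ≤ ∑ j, max (u (σ (Sum.inr j))) c :=
    Finset.sum_le_sum fun _ _ => le_max_right _ _
  omega

theorem sum_extend_lt_sum {ι κ N : Type*} [Fintype ι] [Fintype κ] [AddCommMonoid N]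
    [PartialOrder N] [IsOrderedCancelAddMonoid N] (φ : κ ↪ ι) {u : κ → N} {v : ι → N}
    (h : ∑ j, u j < ∑ j, v (φ j)) : ∑ i, Function.extend φ u v i < ∑ i, v i := by
  have hsplit : ∀ f : ι → N, ∑ i, f i = ∑ j, f (φ j) + ∑ i ∈ (Finset.univ.map φ)ᶜ, f i :=
    fun f => by rw [← Finset.sum_map, Finset.sum_add_sum_compl]
  have houtside : ∀ i ∈ (Finset.univ.map φ)ᶜ, Function.extend φ u v i = v i := fun i hi =>
    Function.extend_apply' _ _ _ (by simpa using hi)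
  rw [hsplit, hsplit v, Finset.sum_congr rfl houtside]
  simpa only [φ.injective.extend_apply] using add_lt_add_left h _

variable {p n : ℕ}

/-- The column `x` of the generic matrix `Z`. -/
def genericColumn (p n : ℕ) (x : Fin n) (i : Fin p) : MvPolynomial (Fin p × Fin n) ℂ :=
  X (i, x)

theorem Dmin_eq_detRowAlternating (α : Fin p → Fin n) :
    Dmin p n α = Matrix.detRowAlternating (genericColumn p n ∘ α) :=
  (Matrix.det_transpose _).symm

theorem partialAlternating_genericColumn {κ : Type*} (φ : κ ↪ Fin p) (I : Fin p → Fin n)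
    (u : κ → Fin n) :
    partialAlternating Matrix.detRowAlternating φ (genericColumn p n ∘ I) (genericColumn p n ∘ u) =
      Dmin p n (Function.extend φ u I) := by
  rw [Dmin_eq_detRowAlternating]
  exact congrArg _ (funext fun i => (Function.apply_extend _ _ _ i).symm)

theorem extend_comp_self {ι κ A : Type*} (φ : κ → ι) (v : ι → A) :
    Function.extend φ (v ∘ φ) v = v := by
  funext i
  by_cases hi : ∃ j, φ j = i
  · obtain ⟨j, rfl⟩ := hi
    exact Function.FactorsThrough.extend_apply (fun _ _ h => congrArg v h) _ _
  · exact Function.extend_apply' _ _ _ hi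

/-- The sum of the entries of a tuple. -/
def tupleSum (I : Fin p → Fin n) : ℕ := ∑ i, (I i : ℕ)

theorem not_linearIndependent_Ici_sum_Iic {R : Type*} [CommRing R] [StrongRankCondition R]
    (k : Fin p) (w : {i // k ≤ i} ⊕ {i // i ≤ k} → Fin p → R) : ¬ LinearIndependent R w := by
  intro hw
  have hcard := hw.fintype_card_le_finrank
  rw [Module.finrank_fin_fun, Fintype.card_sum, Fintype.card_subtype, Fintype.card_subtype] at hcard
  have hIci : Finset.univ.filter (k ≤ ·) = Finset.Ici k := by ext; simp
  have hIic : Finset.univ.filter (· ≤ k) = Finset.Iic k := by ext; simp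
  rw [hIci, hIic, Fin.card_Ici, Fin.card_Iic] at hcard
  omega

/-- Exchange relation: `I` from position `k` on is shuffled with `J` up to position `k`. Since
every entry of the first block exceeds every entry of the second one, a nontrivial shuffle
decreases the sum of the first tuple. -/
theorem Dmin_mul_mem_span {I J : Fin p → Fin n} (hI : Monotone I) (hJ : Monotone J) {k : Fin p}
    (hk : J k < I k) :
    Dmin p n I * Dmin p n J ∈ Submodule.span ℂ
      {f | ∃ I' J', tupleSum I' < tupleSum I ∧ f = Dmin p n I' * Dmin p n J'} := by
  let φ : {i // k ≤ i} ↪ Fin p := Function.Embedding.subtype _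
  let ψ : {i // i ≤ k} ↪ Fin p := Function.Embedding.subtype _
  let entry : {i // k ≤ i} ⊕ {i // i ≤ k} → Fin n := Sum.elim (I ∘ φ) (J ∘ ψ)
  have hexchange := mul_mem_closure_of_not_linearIndependent
    (partialAlternating Matrix.detRowAlternating φ (genericColumn p n ∘ I))
    (partialAlternating Matrix.detRowAlternating ψ (genericColumn p n ∘ J))
    (not_linearIndependent_Ici_sum_Iic k (genericColumn p n ∘ entry))
  simp only [Function.comp_assoc, partialAlternating_genericColumn] at hexchange
  simp only [entry, Sum.elim_comp_inl, Sum.elim_comp_inr, extend_comp_self] at hexchange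
  refine (AddSubgroup.closure_le (Submodule.span ℂ _).toAddSubgroup).2 ?_ hexchange
  rintro _ ⟨σ, hσ, rfl⟩
  refine Submodule.subset_span ⟨_, _, ?_, rfl⟩
  have hlt := sum_comp_inl_lt_of_notMem_range_sumCongrHom (u := fun x => (entry x : ℕ))
    (fun i => hI i.2) (fun j => (hJ j.2).trans_lt hk) hσ
  simp only [tupleSum, Function.apply_extend Fin.val]
  exact sum_extend_lt_sum φ hlt

theorem Dmin_comp_perm (I : Fin p → Fin n) (σ : Equiv.Perm (Fin p)) :
    Dmin p n (I ∘ σ) = (Equiv.Perm.sign σ : ℤ) • Dmin p n I := by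
  rw [Dmin_eq_detRowAlternating, Dmin_eq_detRowAlternating]
  exact Matrix.detRowAlternating.map_perm (genericColumn p n ∘ I) σ

theorem injective_of_Dmin_ne_zero {I : Fin p → Fin n} (h : Dmin p n I ≠ 0) :
    Function.Injective I := fun i j hij => by
  by_contra hne
  rw [Dmin_eq_detRowAlternating] at h
  exact h (AlternatingMap.map_eq_zero_of_eq _ _ (congrArg (genericColumn p n) hij) hne)

end Exchange

section Straightening

variable {p n d : ℕ}

/-- The product of the minors attached to a sequence of tuples. -/
def minorProd (T : Fin d → Fin p → Fin n) : MvPolynomial (Fin p × Fin n) ℂ :=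
  ∏ c, Dmin p n (T c)

/-- Semistandard tableaux with `d` columns of length `p` and entries in `Fin n`: weakly increasing
chains of strictly increasing tuples. -/
abbrev Tableau (p n d : ℕ) :=
  {T : Fin d → Fin p → Fin n // (∀ c, StrictMono (T c)) ∧ Monotone T}

/-- The sums of the columns, compared lexicographically; straightening decreases them. -/
def columnSums (T : Fin d → Fin p → Fin n) : Lex (Fin d → ℕ) :=
  toLex fun c => tupleSum (T c)

theorem minorProd_eq_zero_or_exists_strictMono (T : Fin d → Fin p → Fin n) :
    minorProd T = 0 ∨ ∃ T' : Fin d → Fin p → Fin n, (∀ c, StrictMono (T' c)) ∧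
      columnSums T' = columnSums T ∧ ∃ z : ℤ, minorProd T = z • minorProd T' := by
  refine or_iff_not_imp_left.2 fun h => ⟨fun c => T c ∘ Tuple.sort (T c), fun c => ?_, ?_,
    ∏ c, (Equiv.Perm.sign (Tuple.sort (T c)) : ℤ), ?_⟩
  · exact (Tuple.monotone_sort (T c)).strictMono_of_injective ((injective_of_Dmin_ne_zero
      (Finset.prod_ne_zero_iff.1 h c (Finset.mem_univ c))).comp (Tuple.sort (T c)).injective)
  · exact congrArg toLex (funext fun c => Equiv.sum_comp (Tuple.sort (T c)) fun i => (T c i : ℕ))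
  · simp only [minorProd, Dmin_comp_perm, zsmul_eq_mul, Int.cast_prod, ← Finset.prod_mul_distrib]
    refine Finset.prod_congr rfl fun c _ => ?_
    rw [← mul_assoc, ← Int.cast_mul, ← Units.val_mul, Int.units_mul_self, Units.val_one,
      Int.cast_one, one_mul]

theorem prod_update_update {ι A M : Type*} [Fintype ι] [DecidableEq ι] [CommMonoid M] (f : A → M)
    (T : ι → A) {c c' : ι} (hne : c ≠ c') (x y : A) :
    ∏ b, f (Function.update (Function.update T c x) c' y b) =
      f x * f y * ∏ b ∈ {c, c'}ᶜ, f (T b) := by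
  rw [← Finset.prod_mul_prod_compl {c, c'}, Finset.prod_pair hne, Function.update_self,
    Function.update_of_ne hne, Function.update_self]
  refine congrArg _ (Finset.prod_congr rfl fun b hb => ?_)
  simp only [Finset.mem_compl, Finset.mem_insert, Finset.mem_singleton, not_or] at hb
  rw [Function.update_of_ne hb.2, Function.update_of_ne hb.1]

theorem minorProd_mem_span_of_lt {T : Fin d → Fin p → Fin n} (hT : ∀ c, Monotone (T c))
    {c c' : Fin d} (hcc : c < c') {k : Fin p} (hk : T c' k < T c k) :
    minorProd T ∈ Submodule.span ℂ {f | ∃ U, columnSums U < columnSums T ∧ f = minorProd U} := by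
  have hprod := prod_update_update (Dmin p n) T hcc.ne
  have hsplit : minorProd T =
      Dmin p n (T c) * Dmin p n (T c') * ∏ b ∈ {c, c'}ᶜ, Dmin p n (T b) := by
    rw [← hprod, Function.update_eq_self, Function.update_eq_self, minorProd]
  rw [hsplit]
  refine (Submodule.span_le.2 ?_ : _ ≤ (Submodule.span ℂ _).comap (LinearMap.mulRight ℂ _))
    (Dmin_mul_mem_span (hT c) (hT c') hk)
  rintro _ ⟨I', J', hlt, rfl⟩
  refine Submodule.subset_span ⟨_, ⟨c, fun b hb => ?_, ?_⟩, (hprod I' J').symm⟩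
  · simp [columnSums, Function.update_of_ne hb.ne, Function.update_of_ne (hb.trans hcc).ne]
  · simpa [columnSums, Function.update_of_ne hcc.ne] using hlt

theorem minorProd_mem_span (T : Fin d → Fin p → Fin n) :
    minorProd T ∈ Submodule.span ℂ (Set.range fun T : Tableau p n d => minorProd T.1) := by
  induction hs : columnSums T using WellFoundedLT.induction generalizing T with
  | _ s ih =>
  subst hs
  rcases minorProd_eq_zero_or_exists_strictMono T with hzero | ⟨T', hstrict, hsums, z, hz⟩
  · exact hzero ▸ Submodule.zero_mem _
  rw [hz]
  refine zsmul_mem ?_ z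
  by_cases hmono : Monotone T'
  · exact Submodule.subset_span ⟨⟨T', hstrict, hmono⟩, rfl⟩
  simp only [Monotone, Pi.le_def, not_forall, not_le] at hmono
  obtain ⟨c, c', hcc, k, hk⟩ := hmono
  have hne : c ≠ c' := fun h => (h ▸ hk).false
  refine Submodule.span_le.2 ?_
    (minorProd_mem_span_of_lt (fun c => (hstrict c).monotone) (hcc.lt_of_ne hne) hk)
  rintro _ ⟨U, hU, rfl⟩
  exact ih _ (hsums ▸ hU) U rfl

end Straightening

section CornerTuple

variable {p n d : ℕ}

theorem val_le_of_strictMono {I : Fin p → Fin n} (hI : StrictMono I) (k : Fin p) :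
    (k : ℕ) ≤ I k := by
  obtain ⟨k, hk⟩ := k
  induction k with
  | zero => exact Nat.zero_le _
  | succ k ih => exact (ih (Nat.lt_of_succ_lt hk)).trans_lt (hI (Nat.lt_succ_self k))

theorem apply_sub_val_add_le_of_strictMono {I : Fin p → Fin n} (hI : StrictMono I) (k : Fin p) :
    (I k - k : ℕ) + p ≤ n := by
  have hrev : StrictMono fun i : Fin p => (I i.rev).rev := fun i j hij =>
    Fin.rev_lt_rev.2 (hI (Fin.rev_lt_rev.2 hij))
  have hle := val_le_of_strictMono hrev k.rev
  rw [Fin.rev_rev, Fin.val_rev, Fin.val_rev] at hle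
  have := val_le_of_strictMono hI k
  omega

/-- The partition `I 0 - 0 ≤ I 1 - 1 ≤ ⋯` attached to a strictly increasing tuple `I`, preceded
by an empty row so that every row has a previous one. -/
def shape (I : Fin p → Fin n) : Fin (p + 1) → ℕ :=
  Fin.cons 0 fun k => I k - k

theorem shape_zero (I : Fin p → Fin n) : shape I 0 = 0 := rfl

theorem shape_succ (I : Fin p → Fin n) (k : Fin p) : shape I k.succ = I k - k := rfl

theorem shape_monotone {I : Fin p → Fin n} (hI : StrictMono I) : Monotone (shape I) := by
  refine Fin.monotone_iff_le_succ.2 fun k => ?_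
  rcases Fin.eq_zero_or_eq_succ k.castSucc with hk | ⟨j, hj⟩
  · rw [hk]
    exact Nat.zero_le _
  · rw [hj, shape_succ, shape_succ]
    have hjk : (k : ℕ) = j + 1 := congrArg Fin.val hj
    have hlt : I j < I k := hI (Fin.lt_def.2 (by omega))
    have := Fin.lt_def.1 hlt
    omega

theorem shape_succ_add_le {I : Fin p → Fin n} (hI : StrictMono I) (k : Fin p) :
    shape I k.succ + p ≤ n :=
  apply_sub_val_add_le_of_strictMono hI k

theorem shape_mono {I J : Fin p → Fin n} (hIJ : I ≤ J) : shape I ≤ shape J := by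
  refine Fin.cases le_rfl fun k => ?_
  exact Nat.sub_le_sub_right (hIJ k) k

theorem eq_of_shape_eq {I J : Fin p → Fin n} (hI : StrictMono I) (hJ : StrictMono J)
    (h : shape I = shape J) : I = J := by
  funext k
  have hk := congrFun h k.succ
  rw [shape_succ, shape_succ] at hk
  have := val_le_of_strictMono hI k
  have := val_le_of_strictMono hJ k
  omega

/-- The PBW tuple recording the corners of the partition attached to `I`: row `k` contributes the
entry `n - λ` if its length `λ` exceeds that of the previous row, and `k` otherwise. -/
def cornerTuple (hpn : p ≤ n) (I : Fin p → Fin n) (k : Fin p) : Fin n :=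
  if h : shape I k.castSucc < shape I k.succ then ⟨n - shape I k.succ, by have := k.2; omega⟩
  else k.castLE hpn

variable (hpn : p ≤ n)

theorem val_cornerTuple (I : Fin p → Fin n) (k : Fin p) :
    (cornerTuple hpn I k : ℕ) =
      if shape I k.castSucc < shape I k.succ then n - shape I k.succ else (k : ℕ) := by
  rw [cornerTuple]
  split_ifs <;> rfl

theorem cornerTuple_eq_iff {I : Fin p → Fin n} (hI : StrictMono I) (k : Fin p) {x : Fin n}
    (hx : p ≤ x) : cornerTuple hpn I k = x ↔
      shape I k.castSucc < shape I k.succ ∧ shape I k.succ = n - x := by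
  rw [Fin.ext_iff, val_cornerTuple]
  have := shape_succ_add_le hI k
  split_ifs <;> omega

theorem isPBW_cornerTuple {I : Fin p → Fin n} (hI : StrictMono I) :
    IsPBW p n (cornerTuple hpn I) := by
  have hbound := shape_succ_add_le hI
  have hcorner : ∀ {j k : Fin p}, j < k → shape I k.castSucc < shape I k.succ →
      shape I j.succ < shape I k.succ := fun hjk =>
    (shape_monotone hI (Fin.succ_le_castSucc_iff.2 hjk)).trans_lt
  refine ⟨Function.Injective.of_lt_imp_ne fun j k hjk heq => ?_, fun j hj => ?_,
    fun j k hk hkj => ?_⟩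
  · rw [Fin.ext_iff, val_cornerTuple, val_cornerTuple] at heq
    have := hbound j
    have := hbound k
    have := hcorner hjk
    split_ifs at heq <;> omega
  · rw [val_cornerTuple] at hj ⊢
    have := hbound j
    split_ifs at hj ⊢ <;> omega
  · by_contra hjk
    rcases (not_lt.1 hjk).eq_or_lt with rfl | hlt
    · exact hkj.false
    · rw [val_cornerTuple] at hk
      rw [val_cornerTuple, val_cornerTuple] at hkj
      have := hbound j
      have := hbound k
      have := hcorner hlt
      split_ifs at hk hkj <;> omega

end CornerTuple

section TableauExp

/-- Only indices beyond `c`, where `f` and `g` agree, are corners of `f` of height `g c`, whereas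
`c` itself is a corner of `g` of that height. -/
theorem card_corners_lt_of_lt {ι : Type*} [Fintype ι] [LinearOrder ι] {a f g : ι → ℕ}
    (hf : Monotone f) (haf : a ≤ f) {c : ι} (hlt : f c < g c) (heq : ∀ b, c < b → f b = g b) :
    Finset.card {b | a b < f b ∧ f b = g c} < Finset.card {b | a b < g b ∧ g b = g c} := by
  have hsub : Finset.univ.filter (fun b => a b < f b ∧ f b = g c) ⊆
      Finset.univ.filter fun b => a b < g b ∧ g b = g c := by
    refine Finset.monotone_filter_right _ fun b _ hb => ?_
    have hcb : c < b := lt_of_not_ge fun hbc => ((hf hbc).trans_lt hlt).ne hb.2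
    rwa [← heq b hcb]
  refine Finset.card_lt_card ((Finset.ssubset_iff_of_subset hsub).2 ⟨c, ?_, ?_⟩)
  · simpa using (haf c).trans_lt hlt
  · simp [hlt.ne]

theorem eq_of_card_corners_eq {ι : Type*} [Fintype ι] [LinearOrder ι] {a f g : ι → ℕ} {N : ℕ}
    (hf : Monotone f) (hg : Monotone g) (haf : a ≤ f) (hag : a ≤ g) (hfN : ∀ c, f c ≤ N)
    (hgN : ∀ c, g c ≤ N) (h : ∀ l, 0 < l → l ≤ N →
      Finset.card {c | a c < f c ∧ f c = l} = Finset.card {c | a c < g c ∧ g c = l}) :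
    f = g := by
  funext c
  induction c using WellFoundedGT.induction with
  | _ c ih =>
  rcases lt_trichotomy (f c) (g c) with hlt | heq | hgt
  · exact absurd (h _ (Nat.zero_lt_of_lt hlt) (hgN c)) (card_corners_lt_of_lt hf haf hlt ih).ne
  · exact heq
  · exact absurd (h _ (Nat.zero_lt_of_lt hgt) (hfN c))
      (card_corners_lt_of_lt hg hag hgt fun b hb => (ih b hb).symm).ne'

variable {p n d : ℕ} (hpn : p ≤ n)

/-- The exponent of the leading monomial of the product of PBW minors attached to a tableau. -/
def tableauExp (T : Tableau p n d) : Fin p × Fin n →₀ ℕ :=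
  ∑ c, permExp (cornerTuple hpn (T.1 c)) 1

theorem degree_tableauExp (T : Tableau p n d) : (tableauExp hpn T).degree = d * p := by
  simp [tableauExp, degree_permExp]

theorem tableauExp_apply (T : Tableau p n d) (k : Fin p) {x : Fin n} (hx : p ≤ x) :
    tableauExp hpn T (k, x) = Finset.card {c | shape (T.1 c) k.castSucc < shape (T.1 c) k.succ ∧
      shape (T.1 c) k.succ = n - x} := by
  rw [tableauExp, Finsupp.finsetSum_apply, Finset.card_filter]
  refine Finset.sum_congr rfl fun c _ => ?_
  simp only [permExp_apply, inv_one, Equiv.Perm.one_apply, cornerTuple_eq_iff hpn (T.2.1 c) k hx]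

theorem tableauExp_injective : Function.Injective (tableauExp (d := d) hpn) := by
  intro T U h
  have hmono : ∀ (V : Tableau p n d) k, Monotone fun c => shape (V.1 c) k := fun V k _ _ hbc =>
    shape_mono (V.2.2 hbc) k
  have hrow : ∀ k : Fin (p + 1), (fun c => shape (T.1 c) k) = fun c => shape (U.1 c) k := by
    refine Fin.induction (by simp only [shape_zero]) fun k ih => ?_
    refine eq_of_card_corners_eq (a := fun c => shape (T.1 c) k.castSucc) (N := n - p)
      (hmono T _) (hmono U _) (fun c => shape_monotone (T.2.1 c) (Fin.castSucc_le_succ k))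
      (ih.trans_le fun c => shape_monotone (U.2.1 c) (Fin.castSucc_le_succ k))
      (fun c => Nat.le_sub_of_add_le (shape_succ_add_le (T.2.1 c) k))
      (fun c => Nat.le_sub_of_add_le (shape_succ_add_le (U.2.1 c) k)) fun l hl hlN => ?_
    have hcount := DFunLike.congr_fun h (k, ⟨n - l, by omega⟩)
    have hnl : n - (n - l) = l := by omega
    rw [tableauExp_apply hpn T k (by simp only; omega),
      tableauExp_apply hpn U k (by simp only; omega)] at hcount
    simpa only [hnl, ← congrFun ih] using hcount
  exact Subtype.ext <| funext fun c => eq_of_shape_eq (T.2.1 c) (U.2.1 c) <|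
    funext fun k => congrFun (hrow k) c

theorem sigma_tableauExp_injective (hp : 1 ≤ p) :
    Function.Injective fun T : Σ d, Tableau p n d => tableauExp hpn T.2 := by
  rintro ⟨d, T⟩ ⟨d', U⟩ h
  have hdeg := congrArg Finsupp.degree h
  simp only [degree_tableauExp] at hdeg
  obtain rfl := Nat.eq_of_mul_eq_mul_right hp hdeg
  exact congrArg (Sigma.mk d) (tableauExp_injective hpn h)

end TableauExp

section PBWSagbi

variable {p n d : ℕ}

theorem minorProd_append {e : ℕ} (T : Fin d → Fin p → Fin n) (U : Fin e → Fin p → Fin n) :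
    minorProd (Fin.append T U) = minorProd T * minorProd U := by
  simp [minorProd, Fin.prod_univ_add]

theorem mem_span_minorProd_of_mem_Pluecker {f : MvPolynomial (Fin p × Fin n) ℂ}
    (hf : f ∈ Pluecker p n) :
    f ∈ Submodule.span ℂ (Set.range fun T : Σ d, Fin d → Fin p → Fin n => minorProd T.2) := by
  rw [Pluecker, ← Subalgebra.mem_toSubmodule, Algebra.adjoin_eq_span] at hf
  refine Submodule.span_mono (fun g hg => ?_) hf
  induction hg using Submonoid.closure_induction with
  | mem _ hI =>
    obtain ⟨I, rfl⟩ := hI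
    exact ⟨⟨1, fun _ => I⟩, by simp [minorProd]⟩
  | one => exact ⟨⟨0, Fin.elim0⟩, by simp [minorProd]⟩
  | mul _ _ _ _ hT hU =>
    obtain ⟨⟨d, T⟩, rfl⟩ := hT
    obtain ⟨⟨e, U⟩, rfl⟩ := hU
    exact ⟨⟨d + e, Fin.append T U⟩, minorProd_append T U⟩

variable (hpn : p ≤ n)

/-- The product of the PBW minors attached to the columns of a tableau. -/
def pbwProd (T : Tableau p n d) : MvPolynomial (Fin p × Fin n) ℂ :=
  minorProd fun c => cornerTuple hpn (T.1 c)

theorem pbwProd_ne_zero (T : Tableau p n d) : pbwProd hpn T ≠ 0 := by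
  rw [pbwProd, minorProd]
  exact Finset.prod_ne_zero_iff.2 fun c _ => (isPBW_cornerTuple hpn (T.2.1 c)).Dmin_ne_zero

theorem degree_pbwProd (T : Tableau p n d) :
    (pbwOrder hpn).degree (pbwProd hpn T) = tableauExp hpn T := by
  have hPBW := fun c => isPBW_cornerTuple hpn (T.2.1 c)
  rw [pbwProd, minorProd, MonomialOrder.degree_prod fun c _ => (hPBW c).Dmin_ne_zero]
  exact Finset.sum_congr rfl fun c _ => (hPBW c).degree_Dmin hpn

theorem pbwProd_mem_closure (T : Tableau p n d) :
    pbwProd hpn T ∈ Submonoid.closure {f | ∃ α, IsPBW p n α ∧ f = Dmin p n α} := by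
  rw [pbwProd, minorProd]
  refine prod_mem fun c _ => Submonoid.subset_closure ?_
  exact ⟨_, isPBW_cornerTuple hpn (T.2.1 c), rfl⟩

/-- There are as many products of PBW minors as products of minors along tableaux, and the former
are linearly independent, having distinct leading monomials. -/
theorem span_pbwProd_eq :
    Submodule.span ℂ (Set.range (pbwProd (d := d) hpn)) =
      Submodule.span ℂ (Set.range fun T : Tableau p n d => minorProd T.1) := by
  refine span_range_eq_of_linearIndependent
    (linearIndependent_of_degree_injective (m := pbwOrder hpn) (pbwProd_ne_zero hpn) ?_)
    fun T => minorProd_mem_span _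
  simpa only [degree_pbwProd] using tableauExp_injective hpn

theorem mem_span_pbwProd_of_mem_Pluecker {f : MvPolynomial (Fin p × Fin n) ℂ}
    (hf : f ∈ Pluecker p n) :
    f ∈ Submodule.span ℂ (Set.range fun T : Σ d, Tableau p n d => pbwProd hpn T.2) := by
  refine Submodule.span_le.2 ?_ (mem_span_minorProd_of_mem_Pluecker hf)
  rintro _ ⟨⟨d, T⟩, rfl⟩
  have hT := minorProd_mem_span T
  rw [← span_pbwProd_eq hpn] at hT
  exact Submodule.span_mono (Set.range_subset_iff.2 fun U => Set.mem_range_self (Sigma.mk d U)) hT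

theorem degree_pbwProd_injective (hp : 1 ≤ p) : Function.Injective
    fun T : Σ d, Tableau p n d => (pbwOrder hpn).degree (pbwProd hpn T.2) := by
  simpa only [degree_pbwProd] using sigma_tableauExp_injective hpn hp

end PBWSagbi

/-- The minors `D_I` with `I` a PBW tuple form a sagbi basis of the
Plücker algebra with respect to `<_pbw`: they generate `𝒫`, the initial term of `D_I`
is `z_{1,α₁}⋯z_{p,α_p}`, and these monomials generate the initial subalgebra. -/
theorem statement5 (p n : ℕ) (hp : 1 ≤ p) (hpn : p < n) :
    Algebra.adjoin ℂ {f | ∃ α : Fin p → Fin n, IsPBW p n α ∧ f = Dmin p n α} =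
        Pluecker p n ∧
      (∀ α : Fin p → Fin n, IsPBW p n α →
        initTerm (degRevLex (rankPBW p n)) (Dmin p n α) = ∏ j : Fin p, X (j, α j)) ∧
      Subalgebra.toSubmodule (Algebra.adjoin ℂ
          {f | ∃ α : Fin p → Fin n, IsPBW p n α ∧
            f = initTerm (degRevLex (rankPBW p n)) (Dmin p n α)}) =
        initSpan (degRevLex (rankPBW p n)) (Pluecker p n) := by
  set m := pbwOrder hpn.le
  set S := {f | ∃ α : Fin p → Fin n, IsPBW p n α ∧ f = Dmin p n α}
  have hinit : initTerm (degRevLex (rankPBW p n)) = m.leadingTerm :=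
    funext (initTerm_degRevLex_eq_leadingTerm (rankPBW_injective hpn.le))
  have hS : S ⊆ Pluecker p n := by
    rintro _ ⟨α, -, rfl⟩
    exact Algebra.subset_adjoin (Set.mem_range_self α)
  have himage : {f | ∃ α : Fin p → Fin n, IsPBW p n α ∧ f = m.leadingTerm (Dmin p n α)} =
      m.leadingTerm '' S := by
    ext f
    aesop
  have hclosure := fun T : Σ d, Tableau p n d => pbwProd_mem_closure hpn.le T.2
  have hspan := fun f => mem_span_pbwProd_of_mem_Pluecker (f := f) hpn.le
  refine ⟨adjoin_eq_of_mem_span_range hS hclosure hspan, fun α hα => ?_, ?_⟩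
  · rw [hinit, hα.leadingTerm_Dmin]
  · rw [initSpan, hinit, himage]
    exact adjoin_leadingTerm_image_eq hS hclosure (fun T => pbwProd_ne_zero hpn.le T.2)
      (degree_pbwProd_injective hpn.le hp) hspan
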